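/- For every real a ≥ 1 and every real x with 0 ≤ x ≤ 1/a, one has H(x) − (1/a)·H(ax) ≥ x·(ln a − x)·log₂e. -/

import Mathlib

/-- The binary entropy function `H(x) = -x·log₂ x - (1-x)·log₂(1-x)`,
extended by `H(0) = H(1) = 0` (automatic since `logb 2 0 = 0`). -/
noncomputable def binEntropy (x : ℝ) : ℝ :=
  -x * Real.logb 2 x - (1 - x) * Real.logb 2 (1 - x)

/-!
In natural units, with `η u = -u log u`, the product rule `η (a x) = x η a + a η x` cancels the
terms `η x`, so that `H x - H (a x) / a` equals `x log a + η (1 - x) - η (1 - a x) / a`. The two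
tangent-line bounds `u (1 - u) ≤ η u ≤ 1 - u` then leave
`x log a + (1 - x) x - x = x (log a - x)`.
-/

lemma mul_one_sub_le_negMulLog {u : ℝ} (hu : 0 ≤ u) : u * (1 - u) ≤ Real.negMulLog u := by
  rcases hu.eq_or_lt with rfl | hu
  · simp
  · have hlog : 1 - u ≤ -Real.log u := by linarith [Real.log_le_sub_one_of_pos hu]
    calc u * (1 - u) ≤ u * -Real.log u := mul_le_mul_of_nonneg_left hlog hu.le
      _ = Real.negMulLog u := by rw [Real.negMulLog, neg_mul_comm]

lemma binEntropy_eq_div_log_two (x : ℝ) : binEntropy x = Real.binEntropy x / Real.log 2 := by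
  rw [Real.binEntropy_eq_negMulLog_add_negMulLog_one_sub]
  simp only [binEntropy, Real.negMulLog, Real.logb]
  ring

lemma real_binEntropy_sub_one_div_mul_binEntropy_mul {a : ℝ} (ha : a ≠ 0) (x : ℝ) :
    Real.binEntropy x - 1 / a * Real.binEntropy (a * x) =
      x * Real.log a + Real.negMulLog (1 - x) - 1 / a * Real.negMulLog (1 - a * x) := by
  have hη : 1 / a * Real.negMulLog (a * x) = Real.negMulLog x - x * Real.log a := by
    rw [Real.negMulLog_mul, Real.negMulLog.eq_def a]
    field_simp
    ring
  simp only [Real.binEntropy_eq_negMulLog_add_negMulLog_one_sub, mul_add, hη]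
  ring

lemma mul_log_sub_le_real_binEntropy_sub {a x : ℝ} (ha : 0 < a) (hx : x ≤ 1) (hax : a * x ≤ 1) :
    x * (Real.log a - x) ≤ Real.binEntropy x - 1 / a * Real.binEntropy (a * x) := by
  have hlower : (1 - x) * x ≤ Real.negMulLog (1 - x) := by
    simpa only [sub_sub_cancel] using mul_one_sub_le_negMulLog (sub_nonneg.2 hx)
  have hupper : 1 / a * Real.negMulLog (1 - a * x) ≤ x := by
    rw [one_div_mul_eq_div, div_le_iff₀' ha]
    simpa only [sub_sub_cancel] using Real.negMulLog_le_one_sub_self (sub_nonneg.2 hax)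
  calc x * (Real.log a - x) = x * Real.log a + (1 - x) * x - x := by ring
    _ ≤ x * Real.log a + Real.negMulLog (1 - x) - 1 / a * Real.negMulLog (1 - a * x) := by gcongr
    _ = Real.binEntropy x - 1 / a * Real.binEntropy (a * x) :=
      (real_binEntropy_sub_one_div_mul_binEntropy_mul ha.ne' x).symm

theorem stmt2_general {a x : ℝ} (ha : 0 < a) (hx : x ∈ Set.Icc 0 1) (hxa : x ≤ 1 / a) :
    binEntropy x - (1 / a) * binEntropy (a * x) ≥
      x * (Real.log a - x) * Real.logb 2 (Real.exp 1) := by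
  have hnat := mul_log_sub_le_real_binEntropy_sub ha hx.2 ((le_div_iff₀' ha).1 hxa)
  calc x * (Real.log a - x) * Real.logb 2 (Real.exp 1)
      = x * (Real.log a - x) / Real.log 2 := by rw [Real.logb, Real.log_exp, mul_one_div]
    _ ≤ (Real.binEntropy x - 1 / a * Real.binEntropy (a * x)) / Real.log 2 :=
      div_le_div_of_nonneg_right hnat (Real.log_pos one_lt_two).le
    _ = binEntropy x - 1 / a * binEntropy (a * x) := by
      rw [binEntropy_eq_div_log_two, binEntropy_eq_div_log_two, sub_div, mul_div_assoc]

theorem stmt2 (a x : ℝ) (ha : 1 ≤ a) (hx0 : 0 ≤ x) (hx1 : x ≤ 1 / a) :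
    binEntropy x - (1 / a) * binEntropy (a * x) ≥
      x * (Real.log a - x) * Real.logb 2 (Real.exp 1) := by
  have ha0 : 0 < a := zero_lt_one.trans_le ha
  exact stmt2_general ha0 ⟨hx0, hx1.trans ((div_le_one₀ ha0).2 ha)⟩ hx1
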